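/- Let G = (V,E,W) and H = (V,E,W') be two weighted graphs on the same node set V and edge set E, with the convention ∞ − ∞ = 0. Then for every pair of nodes x, x' ∈ V (connected or not), |s_G(x,x') − s_H(x,x')| ≤ d_{(V,E)}(G,H); consequently, closeness decentrality satisfies |C̄_C^G(x) − C̄_C^H(x)| ≤ n · d_{(V,E)}(G,H) for every node x even without assuming strong connectivity. -/

import Mathlib

/-!
Deleting a cycle from a walk keeps its endpoints and does not increase its length, so every walk
may be replaced by a walk without repeated nodes (`IsWalkFrom.exists_nodup`). Such a path uses each
edge of `E` at most once, so replacing the weights `W` by `W'` changes its length by at most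
`∑ e ∈ E, |W e - W' e|` (`walkLength_le_add`). Taking infima gives
`s_H(x,y) ≤ s_G(x,y) + d(G,H)` in `[0,∞]` (`spdist_le_add`). By symmetry the two distances are
infinite simultaneously, in which case both have `toReal` equal to `0`, and otherwise they
differ by at most `d(G,H)`. The bound on closeness decentrality is the sum of these over the nodes.
-/

open scoped ENNReal

/-- `p` is the tail of a walk from `x` to `y` along edges of `E`:
the node sequence of the walk is `x :: p` and consecutive nodes are joined by edges in `E`. -/
def IsWalkFrom {V : Type*} (E : Finset (V × V)) (x y : V) (p : List V) : Prop :=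
  List.Chain (fun a b => (a, b) ∈ E) x p ∧ (x :: p).getLast (List.cons_ne_nil x p) = y

/-- The length of the walk with node sequence `x :: p`: the sum of the weights of the
traversed edges (as an extended nonnegative real). -/
noncomputable def walkLength {V : Type*} (W : V × V → ℝ) (x : V) (p : List V) : ℝ≥0∞ :=
  (((x :: p).zip p).map fun e => ENNReal.ofReal (W e)).sum

/-- Shortest path length `s_G(x,y)`: the infimum of the lengths of all paths from `x`
to `y`, equal to `∞` when no such path exists. -/
noncomputable def spdist {V : Type*} (E : Finset (V × V)) (W : V × V → ℝ) (x y : V) : ℝ≥0∞ :=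
  sInf {l : ℝ≥0∞ | ∃ p : List V, IsWalkFrom E x y p ∧ l = walkLength W x p}

/-- The ℓ¹ metric `d_{(V,E)}` on the space of weighted graphs sharing
the node set `V` and edge set `E`. -/
def graphDist {V : Type*} (E : Finset (V × V)) (W W' : V × V → ℝ) : ℝ :=
  ∑ e ∈ E, |W e - W' e|

/-- Closeness decentrality `C̄_C(x) = ∑_{x' ∈ V} s_G(x,x')` (terms with
`s_G(x,x') = ∞` are handled via `toReal`, consistently with the convention
`∞ - ∞ = 0` since `G` and `H` share the same edge set). -/
noncomputable def closenessDecentrality {V : Type*} [Fintype V] (E : Finset (V × V))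
    (W : V × V → ℝ) (x : V) : ℝ :=
  ∑ y : V, (spdist E W x y).toReal

section Walks

variable {V : Type*} {E : Finset (V × V)} {x y a : V} {p : List V}

theorem isWalkFrom_nil : IsWalkFrom E x y [] ↔ x = y := by
  simp [IsWalkFrom, List.Chain]

theorem isWalkFrom_cons : IsWalkFrom E x y (a :: p) ↔ (x, a) ∈ E ∧ IsWalkFrom E a y p := by
  simp [IsWalkFrom, List.Chain, and_assoc]

theorem walkLength_cons (W : V × V → ℝ) :
    walkLength W x (a :: p) = ENNReal.ofReal (W (x, a)) + walkLength W a p := by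
  simp [walkLength]

/-- The part of a walk after an occurrence of the node `x` is a walk starting at `x`, and it is
no longer than the whole walk. -/
theorem IsWalkFrom.exists_suffix (W : V × V → ℝ) (h : IsWalkFrom E a y p) (hx : x ∈ a :: p) :
    ∃ q, IsWalkFrom E x y q ∧ x :: q <:+ a :: p ∧ walkLength W x q ≤ walkLength W a p := by
  induction p generalizing a with
  | nil =>
    obtain rfl : x = a := by simpa using hx
    exact ⟨[], h, List.suffix_rfl, le_rfl⟩
  | cons b p ih =>
    rcases List.mem_cons.1 hx with rfl | hx
    · exact ⟨b :: p, h, List.suffix_rfl, le_rfl⟩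
    · obtain ⟨q, hq, hs, hl⟩ := ih (isWalkFrom_cons.1 h).2 hx
      refine ⟨q, hq, hs.trans (List.suffix_cons _ _), hl.trans ?_⟩
      rw [walkLength_cons]
      exact le_add_self

/-- Every walk can be shortened to a walk between the same endpoints without repeated nodes. -/
theorem IsWalkFrom.exists_nodup (W : V × V → ℝ) (h : IsWalkFrom E x y p) :
    ∃ q, IsWalkFrom E x y q ∧ (x :: q).Nodup ∧ walkLength W x q ≤ walkLength W x p := by
  induction p generalizing x with
  | nil => exact ⟨[], h, by simp, le_rfl⟩
  | cons a p ih =>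
    obtain ⟨hxa, hp⟩ := isWalkFrom_cons.1 h
    obtain ⟨q, hq, hn, hl⟩ := ih hp
    by_cases hx : x ∈ a :: q
    · -- The path from `a` returns to `x`: cut out the cycle through `x`.
      obtain ⟨t, ht, hs, hlt⟩ := hq.exists_suffix W hx
      refine ⟨t, ht, hn.sublist hs.sublist, (hlt.trans hl).trans ?_⟩
      rw [walkLength_cons]
      exact le_add_self
    · refine ⟨a :: q, isWalkFrom_cons.2 ⟨hxa, hq⟩, List.nodup_cons.2 ⟨hx, hn⟩, ?_⟩
      rw [walkLength_cons, walkLength_cons]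
      gcongr

theorem IsWalkFrom.mem_of_mem_zip (h : IsWalkFrom E x y p) {e : V × V}
    (he : e ∈ (x :: p).zip p) : e ∈ E := by
  induction p generalizing x with
  | nil => simp at he
  | cons a p ih =>
    obtain ⟨hxa, hp⟩ := isWalkFrom_cons.1 h
    rw [List.zip_cons_cons] at he
    rcases List.mem_cons.1 he with rfl | he
    · exact hxa
    · exact ih hp he

/-- A path without repeated nodes does not repeat an edge, since the targets of its edges are
pairwise distinct. -/
theorem nodup_zip_of_nodup (h : (x :: p).Nodup) : ((x :: p).zip p).Nodup := by
  refine List.Nodup.of_map Prod.snd ?_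
  rw [List.map_snd_zip (by simp)]
  exact (List.nodup_cons.1 h).2

theorem walkLength_le_add (W W' : V × V → ℝ) (h : IsWalkFrom E x y p) (hn : (x :: p).Nodup) :
    walkLength W' x p ≤ walkLength W x p + ENNReal.ofReal (graphDist E W W') := by
  classical
  have hsum (f : V × V → ℝ≥0∞) :
      (((x :: p).zip p).map f).sum = ∑ e ∈ ((x :: p).zip p).toFinset, f e :=
    (List.sum_toFinset f (nodup_zip_of_nodup hn)).symm
  have hsub : ((x :: p).zip p).toFinset ⊆ E := fun e he =>
    h.mem_of_mem_zip (List.mem_toFinset.1 he)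
  rw [walkLength, walkLength, hsum, hsum, graphDist,
    ENNReal.ofReal_sum_of_nonneg fun _ _ => abs_nonneg _]
  calc ∑ e ∈ ((x :: p).zip p).toFinset, ENNReal.ofReal (W' e)
      ≤ ∑ e ∈ ((x :: p).zip p).toFinset,
          (ENNReal.ofReal (W e) + ENNReal.ofReal |W e - W' e|) := by
        refine Finset.sum_le_sum fun e _ => ?_
        refine le_trans (ENNReal.ofReal_le_ofReal ?_) ENNReal.ofReal_add_le
        linarith [neg_abs_le (W e - W' e), le_abs_self (W e - W' e)]
    _ ≤ _ := by
        rw [Finset.sum_add_distrib]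
        gcongr

theorem spdist_le_add (W W' : V × V → ℝ) (x y : V) :
    spdist E W' x y ≤ spdist E W x y + ENNReal.ofReal (graphDist E W W') := by
  rw [← tsub_le_iff_right]
  refine le_sInf ?_
  rintro _ ⟨p, hp, rfl⟩
  rw [tsub_le_iff_right]
  obtain ⟨q, hq, hn, hl⟩ := hp.exists_nodup W
  calc spdist E W' x y ≤ walkLength W' x q := sInf_le ⟨q, hq, rfl⟩
    _ ≤ walkLength W x q + _ := walkLength_le_add W W' hq hn
    _ ≤ _ := by gcongr

theorem graphDist_comm (W W' : V × V → ℝ) : graphDist E W W' = graphDist E W' W := by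
  simp only [graphDist, abs_sub_comm]

theorem graphDist_nonneg (W W' : V × V → ℝ) : 0 ≤ graphDist E W W' :=
  Finset.sum_nonneg fun _ _ => abs_nonneg _

theorem abs_toReal_spdist_sub_le (W W' : V × V → ℝ) (x y : V) :
    |(spdist E W x y).toReal - (spdist E W' x y).toReal| ≤ graphDist E W W' := by
  have h₁ := spdist_le_add (E := E) W W' x y
  have h₂ := spdist_le_add (E := E) W' W x y
  rw [graphDist_comm W' W] at h₂
  have hd := graphDist_nonneg (E := E) W W'
  by_cases hW : spdist E W x y = ∞
  · have hW' : spdist E W' x y = ∞ := by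
      rw [hW, top_le_iff, ENNReal.add_eq_top] at h₂
      exact h₂.resolve_right ENNReal.ofReal_ne_top
    simpa [hW, hW'] using hd
  · have hW' : spdist E W' x y ≠ ∞ :=
      ne_top_of_le_ne_top (ENNReal.add_ne_top.2 ⟨hW, ENNReal.ofReal_ne_top⟩) h₁
    have r₁ := ENNReal.toReal_mono (ENNReal.add_ne_top.2 ⟨hW, ENNReal.ofReal_ne_top⟩) h₁
    have r₂ := ENNReal.toReal_mono (ENNReal.add_ne_top.2 ⟨hW', ENNReal.ofReal_ne_top⟩) h₂
    rw [ENNReal.toReal_add hW ENNReal.ofReal_ne_top, ENNReal.toReal_ofReal hd] at r₁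
    rw [ENNReal.toReal_add hW' ENNReal.ofReal_ne_top, ENNReal.toReal_ofReal hd] at r₂
    rw [abs_le]
    constructor <;> linarith

end Walks

/-- Remark 1: with the convention `∞ - ∞ = 0`, for any two graphs
`G = (V,E,W)` and `H = (V,E,W')` on the same `(V,E)` and any pair of nodes `x,x'`
(connected or not, noting that `s_G(x,x') = ∞` iff `s_H(x,x') = ∞` since the edge sets
coincide), `|s_G(x,x') - s_H(x,x')| ≤ d_{(V,E)}(G,H)`; consequently
`|C̄_C^G(x) - C̄_C^H(x)| ≤ n ⬝ d_{(V,E)}(G,H)` for every node `x`, without any strong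
connectivity assumption. -/
theorem shortest_path_and_closeness_stable_general
    {V : Type*} [Fintype V] [DecidableEq V]
    (E : Finset (V × V)) (hE : ∀ e ∈ E, e.1 ≠ e.2)
    (W W' : V × V → ℝ)
    (hW : ∀ e ∈ E, 0 < W e) (hW' : ∀ e ∈ E, 0 < W' e) :
    (∀ x x' : V,
      |(spdist E W x x').toReal - (spdist E W' x x').toReal| ≤ graphDist E W W') ∧
    (∀ x : V,
      |closenessDecentrality E W x - closenessDecentrality E W' x| ≤
        (Fintype.card V : ℝ) * graphDist E W W') := by
  refine ⟨fun x y => abs_toReal_spdist_sub_le W W' x y, fun x => ?_⟩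
  rw [closenessDecentrality, closenessDecentrality, ← Finset.sum_sub_distrib]
  calc |∑ y : V, ((spdist E W x y).toReal - (spdist E W' x y).toReal)|
      ≤ ∑ y : V, |(spdist E W x y).toReal - (spdist E W' x y).toReal| :=
        Finset.abs_sum_le_sum_abs _ _
    _ ≤ ∑ _y : V, graphDist E W W' :=
        Finset.sum_le_sum fun y _ => abs_toReal_spdist_sub_le W W' x y
    _ = (Fintype.card V : ℝ) * graphDist E W W' := by simp
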